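/- There exists a natural number M₀ such that for every m ≥ M₀, no I(m, m−2) admissible set exists. (In the paper, M₀ may be taken to be the hypergraph Ramsey number R⁽³⁾(4,4,4,4,4,4,6,6).) -/

import Mathlib

/-! Index the vector of `A` with zero set `{i, j}`, `i < j`, as `v i j`; its values off `{i, j}` are
`1` or `2`. Colour an increasing triple `i < j < k` by the three values
`(v j k i, v i k j, v i j k)`. Ramsey's theorem for triples (`ramsey_list`) gives six
coordinates on which the colour is a constant `(a, b, c)`: among these coordinates `v i j` equals
`a` before `i`, `b` between `i` and `j`, and `c` after `j`. Three distinct pairs have a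
coordinate lying in exactly two of them unless they form a star or a matching, so these are the
configurations that can clash:

* if `b = c`, the star centred at the first of four coordinates clashes;
* if `a = b`, the star centred at the last of four coordinates clashes;
* if `a = c`, the matching of consecutive pairs of the six coordinates clashes.

Since `a`, `b`, `c` take only two values, one of the three cases applies.
-/

/-- The support of a vector `v ∈ {0,1,2}^m`: the set of coordinates where `v` is nonzero. -/
def Supp {m : ℕ} (v : Fin m → Fin 3) : Finset (Fin m) :=
  Finset.univ.filter (fun i => v i ≠ 0)

/-- Exactly one of the three values `a`, `b`, `c` is nonzero. -/
def ExactlyOneNonzero (a b c : Fin 3) : Prop :=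
  (a ≠ 0 ∧ b = 0 ∧ c = 0) ∨ (a = 0 ∧ b ≠ 0 ∧ c = 0) ∨ (a = 0 ∧ b = 0 ∧ c ≠ 0)

/-- Two vectors form a clash if the support of one is contained in the support of the other. -/
def Clash2 {m : ℕ} (v₁ v₂ : Fin m → Fin 3) : Prop :=
  Supp v₁ ⊆ Supp v₂ ∨ Supp v₂ ⊆ Supp v₁

/-- Three vectors form a clash if there is no coordinate at which exactly one of them is
nonzero and no coordinate at which the three values are pairwise distinct. -/
def Clash3 {m : ℕ} (v₁ v₂ v₃ : Fin m → Fin 3) : Prop :=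
  (¬ ∃ i, ExactlyOneNonzero (v₁ i) (v₂ i) (v₃ i)) ∧
  (¬ ∃ i, v₁ i ≠ v₂ i ∧ v₁ i ≠ v₃ i ∧ v₂ i ≠ v₃ i)

/-- A set of vectors is admissible if no two and no three of its elements form a clash. -/
def IsAdmissible {m : ℕ} (A : Set (Fin m → Fin 3)) : Prop :=
  (∀ v₁ ∈ A, ∀ v₂ ∈ A, v₁ ≠ v₂ → ¬ Clash2 v₁ v₂) ∧
  (∀ v₁ ∈ A, ∀ v₂ ∈ A, ∀ v₃ ∈ A, v₁ ≠ v₂ → v₁ ≠ v₃ → v₂ ≠ v₃ → ¬ Clash3 v₁ v₂ v₃)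

/-- `A` is an `I(m,w)` set: for every `w`-element subset `S` of `[m]` it contains exactly one
vector with support `S`, and it contains no other vectors. -/
def IsISet (m w : ℕ) (A : Set (Fin m → Fin 3)) : Prop :=
  (∀ S : Finset (Fin m), S.card = w → ∃! v, v ∈ A ∧ Supp v = S) ∧
  (∀ v ∈ A, (Supp v).card = w)

/-- The list of nonzero values of `v`, read in increasing order of position. -/
def nonzeroValues {m : ℕ} (v : Fin m → Fin 3) : List (Fin 3) :=
  ((Supp v).sort (· ≤ ·)).map v

/-- `v` is of type `t` if `v` has at least `t.length` nonzero coordinates and the `i`-th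
nonzero value of `v` (in increasing order of position) is `t i`, i.e. `t` is a prefix of the
list of nonzero values of `v`. -/
def IsOfType {m : ℕ} (v : Fin m → Fin 3) (t : List (Fin 3)) : Prop :=
  t <+: nonzeroValues v

/-- `S₁, S₂, S₃` form a type `t` clash: whenever `v₁, v₂, v₃` have supports `S₁, S₂, S₃`
respectively and are all of type `t`, they form a clash. -/
def TypedClash {m : ℕ} (t : List (Fin 3)) (S₁ S₂ S₃ : Finset (Fin m)) : Prop :=
  ∀ v₁ v₂ v₃ : Fin m → Fin 3, Supp v₁ = S₁ → Supp v₂ = S₂ → Supp v₃ = S₃ →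
    IsOfType v₁ t → IsOfType v₂ t → IsOfType v₃ t → Clash3 v₁ v₂ v₃

/-- Ramsey's theorem for `r`-uniform hypergraphs with finitely many colours. An `r`-element
subset is encoded as its strictly increasing list of elements; the bound `N` does not depend on
the ambient order. -/
theorem ramsey_list (K : Type) [Fintype K] [Nonempty K] (r : ℕ) : ∀ n : ℕ, ∃ N : ℕ,
    ∀ (α : Type) [LinearOrder α] (S : Finset α) (f : List α → K), N ≤ S.card →
      ∃ T ⊆ S, n ≤ T.card ∧ ∃ c, ∀ l : List α, l.length = r → l.Pairwise (· < ·) →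
        (∀ x ∈ l, x ∈ T) → f l = c := by
  classical
  induction r with
  | zero =>
    intro n
    refine ⟨n, fun α _ S f hS => ⟨S, subset_rfl, hS, f [], fun l hl _ _ => ?_⟩⟩
    rw [List.length_eq_zero_iff.mp hl]
  | succ r ih =>
    -- A large set on which the colour of a list of length `r + 1` depends only on its head.
    have key : ∀ n : ℕ, ∃ N : ℕ,
        ∀ (α : Type) [LinearOrder α] (S : Finset α) (f : List α → K), N ≤ S.card →
          ∃ T ⊆ S, n ≤ T.card ∧ ∃ g : α → K, ∀ x ∈ T, ∀ l : List α, l.length = r →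
            (x :: l).Pairwise (· < ·) → (∀ y ∈ l, y ∈ T) → f (x :: l) = g x := by
      intro n
      induction n with
      | zero =>
        refine ⟨0, fun α _ S f _ => ⟨∅, by simp, by simp, fun _ => Classical.arbitrary K, ?_⟩⟩
        simp
      | succ n ihn =>
        obtain ⟨N₁, h₁⟩ := ihn
        obtain ⟨N₂, h₂⟩ := ih N₁
        refine ⟨N₂ + 1, fun α _ S f hS => ?_⟩
        have hne : S.Nonempty := Finset.card_pos.mp (by omega)
        -- Peel off the minimum `x` and pass to a set homogeneous for the link of `x`.
        set x := S.min' hne with hx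
        have hxS : x ∈ S := S.min'_mem hne
        obtain ⟨S', hS', hc', c, hc⟩ := h₂ α (S.erase x) (fun l => f (x :: l))
          (by rw [Finset.card_erase_of_mem hxS]; omega)
        obtain ⟨T, hT, hTc, g, hg⟩ := h₁ α S' f hc'
        have hlt : ∀ y ∈ T, x < y := fun y hy => by
          have := Finset.mem_erase.mp (hS' (hT hy))
          exact lt_of_le_of_ne (S.min'_le y this.2) (Ne.symm this.1)
        have hxT : x ∉ T := fun h => lt_irrefl _ (hlt x h)
        refine ⟨insert x T, ?_, ?_, Function.update g x c, ?_⟩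
        · intro y hy
          rcases Finset.mem_insert.mp hy with rfl | hy
          · exact hxS
          · exact Finset.mem_of_mem_erase (hS' (hT hy))
        · rw [Finset.card_insert_of_notMem hxT]; omega
        · intro y hy l hl hp hm
          have hyl := (List.pairwise_cons.mp hp).1
          rcases Finset.mem_insert.mp hy with hyx | hyT
          · have hlT : ∀ z ∈ l, z ∈ T := fun z hz =>
              (Finset.mem_insert.mp (hm z hz)).resolve_left
                (fun h => by have := hyl z hz; rw [h, hyx] at this; exact lt_irrefl _ this)
            rw [hyx, Function.update_self]
            exact hc l hl (List.pairwise_cons.mp hp).2 (fun z hz => hT (hlT z hz))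
          · have hxy := hlt y hyT
            have hlT : ∀ z ∈ l, z ∈ T := fun z hz =>
              (Finset.mem_insert.mp (hm z hz)).resolve_left
                (fun h => by have := hyl z hz; rw [h] at this; exact lt_asymm hxy this)
            rw [Function.update_of_ne hxy.ne']
            exact hg y hyT l hl hp hlT
    intro n
    obtain ⟨N, hN⟩ := key (Fintype.card K * n)
    refine ⟨N, fun α _ S f hS => ?_⟩
    obtain ⟨T, hT, hTc, g, hg⟩ := hN α S f hS
    obtain ⟨c, -, hc⟩ := Finset.exists_le_card_fiber_of_mul_le_card_of_maps_to
      (s := T) (t := Finset.univ) (f := g) (n := n) (fun _ _ => Finset.mem_univ _)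
      Finset.univ_nonempty (by simpa using hTc)
    refine ⟨T.filter (fun x => g x = c), fun y hy => hT (Finset.mem_filter.mp hy).1, hc, c, ?_⟩
    intro l hl hp hm
    match l, hl, hp, hm with
    | x :: l, hl, hp, hm =>
      have hx := Finset.mem_filter.mp (hm x (by simp))
      rw [hg x hx.1 l (by simpa using hl) hp
        (fun y hy => (Finset.mem_filter.mp (hm y (by simp [hy]))).1)]
      exact hx.2

/-- The condition at a single coordinate for three vectors to clash. -/
def LocalClash (a b c : Fin 3) : Prop :=
  ¬ ExactlyOneNonzero a b c ∧ ¬ (a ≠ b ∧ a ≠ c ∧ b ≠ c)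

theorem localClash_of_ne : ∀ a b c : Fin 3, a ≠ 0 → b ≠ 0 → c ≠ 0 → LocalClash a b c := by
  unfold LocalClash ExactlyOneNonzero; decide

theorem localClash_zero (a : Fin 3) (ha : a ≠ 0) :
    LocalClash 0 a a ∧ LocalClash a 0 a ∧ LocalClash a a 0 := by
  revert a; unfold LocalClash ExactlyOneNonzero; decide

theorem localClash_zero_zero_zero : LocalClash 0 0 0 := by
  unfold LocalClash ExactlyOneNonzero; decide

theorem clash3_of_local {m : ℕ} {u v w : Fin m → Fin 3}
    (h : ∀ x, LocalClash (u x) (v x) (w x)) : Clash3 u v w :=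
  ⟨fun ⟨x, hx⟩ => (h x).1 hx, fun ⟨x, hx⟩ => (h x).2 hx⟩

/-- A doubly indexed family `v i j`, `i < j`, of vectors with zero set `{i, j}` contains a clash
among three of its members as soon as it is homogeneous on six coordinates `e 0 < ⋯ < e 5`. -/
theorem exists_clash_of_homogeneous {m : ℕ} (v : Fin m → Fin m → Fin m → Fin 3)
    (hv : ∀ i j, i < j → ∀ k, v i j k = 0 ↔ k = i ∨ k = j)
    (e : Fin 6 ↪o Fin m) (a b c : Fin 3)
    (h : ∀ i j k : Fin 6, i < j → j < k → v (e j) (e k) (e i) = a ∧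
      v (e i) (e k) (e j) = b ∧ v (e i) (e j) (e k) = c) :
    ∃ i₁ j₁ i₂ j₂ i₃ j₃ : Fin 6, i₁ < j₁ ∧ i₂ < j₂ ∧ i₃ < j₃ ∧
      (i₁, j₁) ≠ (i₂, j₂) ∧ (i₁, j₁) ≠ (i₃, j₃) ∧ (i₂, j₂) ≠ (i₃, j₃) ∧
      Clash3 (v (e i₁) (e j₁)) (v (e i₂) (e j₂)) (v (e i₃) (e j₃)) := by
  have hlt : ∀ i j : Fin 6, i < j → e i < e j := fun i j hij => e.lt_iff_lt.mpr hij
  have hne : ∀ i j k : Fin 6, i < j → k ≠ i → k ≠ j → v (e i) (e j) (e k) ≠ 0 :=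
    fun i j k hij hi hj h0 => by
      rcases (hv _ _ (hlt i j hij) _).mp h0 with h | h
      · exact hi (e.injective h)
      · exact hj (e.injective h)
  have hl : ∀ i j : Fin 6, i < j → v (e i) (e j) (e i) = 0 :=
    fun i j hij => (hv _ _ (hlt i j hij) _).mpr (Or.inl rfl)
  have hr : ∀ i j : Fin 6, i < j → v (e i) (e j) (e j) = 0 :=
    fun i j hij => (hv _ _ (hlt i j hij) _).mpr (Or.inr rfl)
  have ha : ∀ i j k : Fin 6, i < j → j < k → v (e j) (e k) (e i) = a :=
    fun i j k hij hjk => (h i j k hij hjk).1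
  have hb : ∀ i j k : Fin 6, i < j → j < k → v (e i) (e k) (e j) = b :=
    fun i j k hij hjk => (h i j k hij hjk).2.1
  have hc : ∀ i j k : Fin 6, i < j → j < k → v (e i) (e j) (e k) = c :=
    fun i j k hij hjk => (h i j k hij hjk).2.2
  have ha0 : a ≠ 0 := by
    rw [← ha 0 1 2 (by decide) (by decide)]; exact hne _ _ _ (by decide) (by decide) (by decide)
  have hb0 : b ≠ 0 := by
    rw [← hb 0 1 2 (by decide) (by decide)]; exact hne _ _ _ (by decide) (by decide) (by decide)
  have hc0 : c ≠ 0 := by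
    rw [← hc 0 1 2 (by decide) (by decide)]; exact hne _ _ _ (by decide) (by decide) (by decide)
  -- Outside the six coordinates all three values are nonzero, so only those six matter.
  have build : ∀ i₁ j₁ i₂ j₂ i₃ j₃ : Fin 6, i₁ < j₁ → i₂ < j₂ → i₃ < j₃ →
      (∀ x : Fin 6, LocalClash (v (e i₁) (e j₁) (e x)) (v (e i₂) (e j₂) (e x))
        (v (e i₃) (e j₃) (e x))) →
      Clash3 (v (e i₁) (e j₁)) (v (e i₂) (e j₂)) (v (e i₃) (e j₃)) := by
    intro i₁ j₁ i₂ j₂ i₃ j₃ h₁ h₂ h₃ H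
    refine clash3_of_local fun x => ?_
    by_cases hx : ∃ y, x = e y
    · obtain ⟨y, rfl⟩ := hx; exact H y
    · have hx' : ∀ i j : Fin 6, i < j → v (e i) (e j) x ≠ 0 := fun i j hij h0 => by
        rcases (hv _ _ (hlt i j hij) _).mp h0 with h | h
        · exact hx ⟨_, h⟩
        · exact hx ⟨_, h⟩
      exact localClash_of_ne _ _ _ (hx' _ _ h₁) (hx' _ _ h₂) (hx' _ _ h₃)
  have two : ∀ p q r : Fin 3, p ≠ 0 → q ≠ 0 → r ≠ 0 → q = r ∨ p = q ∨ p = r := by decide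
  rcases two a b c ha0 hb0 hc0 with hbc | hab | hac
  · refine ⟨0, 1, 0, 2, 0, 3, by decide, by decide, by decide, by decide, by decide, by decide,
      build _ _ _ _ _ _ (by decide) (by decide) (by decide) fun x => ?_⟩
    subst hbc
    fin_cases x
    all_goals simp +decide [hl, hr, hb, hc, localClash_zero, localClash_of_ne, hb0,
      localClash_zero_zero_zero]
  · refine ⟨0, 3, 1, 3, 2, 3, by decide, by decide, by decide, by decide, by decide, by decide,
      build _ _ _ _ _ _ (by decide) (by decide) (by decide) fun x => ?_⟩
    subst hab
    fin_cases x
    all_goals simp +decide [hl, hr, ha, hb, hc, localClash_zero, localClash_of_ne, ha0, hc0,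
      localClash_zero_zero_zero]
  · refine ⟨0, 1, 2, 3, 4, 5, by decide, by decide, by decide, by decide, by decide, by decide,
      build _ _ _ _ _ _ (by decide) (by decide) (by decide) fun x => ?_⟩
    subst hac
    fin_cases x
    all_goals simp +decide [hl, hr, ha, hc, localClash_zero, ha0]

/-- There exists `M₀` such that for every `m ≥ M₀`, no `I(m, m-2)` admissible set exists. -/
theorem no_Im_m_sub_two_for_large_m :
    ∃ M₀ : ℕ, ∀ m ≥ M₀,
      ¬ ∃ A : Set (Fin m → Fin 3), IsISet m (m - 2) A ∧ IsAdmissible A := by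
  obtain ⟨N, hN⟩ := ramsey_list (Fin 3 × Fin 3 × Fin 3) 3 6
  refine ⟨N, fun m hm => ?_⟩
  rintro ⟨A, hI, hA⟩
  have hex : ∀ i j : Fin m, ∃ u : Fin m → Fin 3, i < j →
      u ∈ A ∧ ∀ k, u k = 0 ↔ k = i ∨ k = j := by
    intro i j
    by_cases hij : i < j
    · obtain ⟨u, ⟨huA, hu⟩, -⟩ := hI.1 ({i, j} : Finset (Fin m))ᶜ (by
        rw [Finset.card_compl, Finset.card_pair hij.ne, Fintype.card_fin])
      refine ⟨u, fun _ => ⟨huA, fun k => ?_⟩⟩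
      have hk : k ∈ Supp u ↔ k ∈ ({i, j} : Finset (Fin m))ᶜ := by rw [hu]
      simp only [Supp, Finset.mem_filter, Finset.mem_univ, true_and, Finset.mem_compl,
        Finset.mem_insert, Finset.mem_singleton] at hk
      exact not_iff_not.mp hk
    · exact ⟨0, fun h => absurd h hij⟩
  choose v hv using hex
  -- Only lists of length three matter; the colour of the others is a dummy value.
  obtain ⟨T, -, hT, ⟨a, b, c⟩, hf⟩ := hN (Fin m) Finset.univ
    (fun l => match l with
      | [i, j, k] => (v j k i, v i k j, v i j k)
      | _ => (0, 0, 0)) (by simpa using hm)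
  obtain ⟨T', hT', hcard⟩ := Finset.exists_subset_card_eq hT
  let e := T'.orderEmbOfFin hcard
  have he : ∀ i, e i ∈ T := fun i => hT' (T'.orderEmbOfFin_mem hcard i)
  obtain ⟨i₁, j₁, i₂, j₂, i₃, j₃, h₁, h₂, h₃, h₁₂, h₁₃, h₂₃, hcl⟩ :=
    exists_clash_of_homogeneous v (fun i j hij => (hv i j hij).2) e a b c (by
      intro i j k hij hjk
      have hij' := e.lt_iff_lt.mpr hij
      have hjk' := e.lt_iff_lt.mpr hjk
      have := hf [e i, e j, e k] rfl (by simp [hij', hjk', hij'.trans hjk']) (by simp [he])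
      simpa using this)
  have hlt : ∀ i j : Fin 6, i < j → e i < e j := fun i j hij => e.lt_iff_lt.mpr hij
  -- The index pair is recovered from the zero set.
  have hinj : ∀ i j k l : Fin 6, i < j → k < l → (i, j) ≠ (k, l) →
      v (e i) (e j) ≠ v (e k) (e l) := by
    intro i j k l hij hkl hne heq
    have hz : ∀ x : Fin 6, (x = i ∨ x = j) ↔ (x = k ∨ x = l) := fun x => by
      have h1 := (hv _ _ (hlt i j hij)).2 (e x)
      rw [heq, (hv _ _ (hlt k l hkl)).2 (e x)] at h1
      simpa using h1.symm
    have hi := (hz i).mp (Or.inl rfl)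
    have hj := (hz j).mp (Or.inr rfl)
    apply hne
    rcases hi with rfl | rfl <;> rcases hj with rfl | rfl
    · exact absurd hij (lt_irrefl _)
    · rfl
    · exact absurd hij (lt_asymm hkl)
    · exact absurd hij (lt_irrefl _)
  exact hA.2 _ (hv _ _ (hlt _ _ h₁)).1 _ (hv _ _ (hlt _ _ h₂)).1 _ (hv _ _ (hlt _ _ h₃)).1
    (hinj _ _ _ _ h₁ h₂ h₁₂) (hinj _ _ _ _ h₁ h₃ h₁₃) (hinj _ _ _ _ h₂ h₃ h₂₃) hcl
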